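/- Let U ⊂ ℝ³ be open and μ, γ ∈ C²(closure U) be nonvanishing, with α = log γ, β = log μ and κ = ω(γμ)^{1/2}. Then the operator factorizations (P̃(D) + W_{μ,γ})(P̃(D) − W_{μ,γ}ᵗ) = −Δ I₈ + Q̃_{μ,γ} and (P̃(D) − W_{μ,γ}ᵗ)(P̃(D) + W_{μ,γ}) = −Δ I₈ + Q̃′_{μ,γ} hold, where the zeroth order matrix potentials are Q̃_{μ,γ} = (1/2)·blockdiag( diag(Δα, 2∇²α − Δα I₃), diag(Δβ, 2∇²β − Δβ I₃) ) − [ [ (κ² + (1/4)(Dα)²) I₄ , S(Dκ) ] ; [ S(Dκ) , (κ² + (1/4)(Dβ)²) I₄ ] ] with S(Dκ) the 4×4 matrix [ [0, 2Dκ·] ; [2Dκ, 0] ], and Q̃′_{μ,γ} = −(1/2)·blockdiag( diag(Δβ, 2∇²β − Δβ I₃), diag(Δα, 2∇²α − Δα I₃) ) − [ [ (κ² + (1/4)(Dβ)²) I₄ , T₊ ] ; [ T₋ , (κ² + (1/4)(Dα)²) I₄ ] ] with T₊ the 4×4 matrix [ [0,0] ; [0, 2Dκ∧] ] and T₋ =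 [ [0,0] ; [0, −2Dκ∧] ]; here ∇²f = (∂²f/∂x_j∂x_k)_{j,k=1}^3 and (Df)² = Df·Df. -/

import Mathlib

/-!
The factorizations are two computations in the second order jet of `Z`, `α`, `β` and the first
order jet of `κ`. The cancellation of all first order terms has an algebraic source, the symbol
identity `P₋(a) P₋(b) = P₊(b) P₊(a)` on `ℂ⁴`: with `a = D`, `b = Dα` or `b = Dβ` it says that
`P̃(D)` and the matrices `P∓` commute, after the exchange `α ↔ β`, up to derivatives of the
coefficients, and these produce the terms `±(2∇²α - Δα I₃)/2` and `±(2∇²β - Δβ I₃)/2`. Likewise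
`P₊(a) P₋(a) = P₋(a) P₊(a) = (a·a) I₄` gives `P̃(D)² = -Δ I₈` (this uses the symmetry of second
derivatives, `pd_comm`) and the terms `(Dα)²/4`, `(Dβ)²/4`. The part `κ I₈` commutes with `P̃(D)`
up to `Dκ`, and the remaining products of `κ` with `Dα`, `Dβ` combine with it because
`Dκ = κ (Dα + Dβ) / 2`, which follows from `κ² = ω² exp (α + β)` and `κ ≠ 0` (`pd_kap`).

`factorization_jet` verifies the resulting polynomial identities in the jets component by component;
the theorem then only has to supply the regularity at each point of the open set `U`.
-/


/- STATEMENT 3: the second order factorization of the rescaled augmented Maxwell system into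
a matrix Schroedinger operator with no first order term (Lemma 1.1 of Caro-Ola-Salo). -/


noncomputable section

open Set Filter Topology MeasureTheory Bornology Metric

/-- Points of `ℝ³`. -/
abbrev V3 : Type := Fin 3 → ℝ
/-- Values of complex vector fields on `ℝ³`. -/
abbrev CV3 : Type := Fin 3 → ℂ
/-- 4-vectors `(φ, vᵗ)ᵗ`. -/
abbrev C4 : Type := Fin 4 → ℂ
/-- 8-vectors, written in the two 4-blocks `(Φ, Hᵗ)ᵗ` and `(Ψ, Eᵗ)ᵗ`. -/
abbrev C8 : Type := C4 × C4

/-- Partial derivative of a complex valued function on `ℝ³`. -/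
def pd (i : Fin 3) (f : V3 → ℂ) (x : V3) : ℂ := fderiv ℝ f x (Pi.single i 1)

/-- Bilinear dot product on `ℂ³`. -/
def dotC (a b : CV3) : ℂ := ∑ i, a i * b i

/-- Cross product on `ℂ³`. -/
def crossC (a b : CV3) : CV3 :=
  ![a 1 * b 2 - a 2 * b 1, a 2 * b 0 - a 0 * b 2, a 0 * b 1 - a 1 * b 0]

/-- Complexification of a real vector. -/
def cplx (v : V3) : CV3 := fun i => (v i : ℂ)

/-- Build a 4-vector from its scalar and vector parts. -/
def mk4 (f : ℂ) (v : CV3) : C4 := ![f, v 0, v 1, v 2]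

/-- The vector part of a 4-vector. -/
def vec4 (u : C4) : CV3 := ![u 1, u 2, u 3]

/-- `P₊(a)(φ,v) = (a·v, φa + a∧v)`. -/
def Pplus (a : CV3) (u : C4) : C4 :=
  mk4 (dotC a (vec4 u)) (fun i => u 0 * a i + crossC a (vec4 u) i)

/-- `P₋(a)(φ,v) = (a·v, φa - a∧v)`. -/
def Pminus (a : CV3) (u : C4) : C4 :=
  mk4 (dotC a (vec4 u)) (fun i => u 0 * a i - crossC a (vec4 u) i)

/-- The 8×8 block matrix `P̃(a,b) = [[0, P₋(b)], [P₊(a), 0]]`. -/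
def Ptilde (a b : CV3) (X : C8) : C8 := (Pminus b X.2, Pplus a X.1)

/-- The 8×8 block matrix `P∓(a,b) = [[0, P₊(b)], [P₋(a), 0]]`. -/
def Pmp (a b : CV3) (X : C8) : C8 := (Pplus b X.2, Pminus a X.1)

/-- The block diagonal matrix `diag(λ₁ I₄, λ₂ I₄)`. -/
def diag8 (l1 l2 : ℂ) (X : C8) : C8 := (l1 • X.1, l2 • X.2)

/-- The vector `D f = -i ∇f`. -/
def Dg (f : V3 → ℂ) (x : V3) : CV3 := fun i => -Complex.I * pd i f x

/-- `D · v = -i ∇ · v`. -/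
def Ddiv (v : V3 → CV3) (x : V3) : ℂ := ∑ i, -Complex.I * pd i (fun y => v y i) x

/-- The curl `∇ ∧ v` of a complex vector field on `ℝ³`. -/
def curl3 (v : V3 → CV3) (x : V3) : CV3 :=
  ![pd 1 (fun y => v y 2) x - pd 2 (fun y => v y 1) x,
    pd 2 (fun y => v y 0) x - pd 0 (fun y => v y 2) x,
    pd 0 (fun y => v y 1) x - pd 1 (fun y => v y 0) x]

/-- `D ∧ v = -i ∇ ∧ v`. -/
def Dcurl (v : V3 → CV3) (x : V3) : CV3 := fun i => -Complex.I * curl3 v x i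

/-- The first order operator `P₊(D)`. -/
def PplusD (u : V3 → C4) (x : V3) : C4 :=
  mk4 (Ddiv (fun y => vec4 (u y)) x)
    (fun i => Dg (fun y => u y 0) x i + Dcurl (fun y => vec4 (u y)) x i)

/-- The first order operator `P₋(D)`. -/
def PminusD (u : V3 → C4) (x : V3) : C4 :=
  mk4 (Ddiv (fun y => vec4 (u y)) x)
    (fun i => Dg (fun y => u y 0) x i - Dcurl (fun y => vec4 (u y)) x i)

/-- The Dirac type operator `P̃(D) = [[0, P₋(D)], [P₊(D), 0]]`. -/
def PtildeD (Z : V3 → C8) (x : V3) : C8 :=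
  (PminusD (fun y => (Z y).2) x, PplusD (fun y => (Z y).1) x)

/-- The Laplacian of a complex valued function. -/
def lapC (f : V3 → ℂ) (x : V3) : ℂ := ∑ i, pd i (fun y => pd i f y) x

/-- Componentwise Laplacian of an 8-vector field. -/
def lap8 (Z : V3 → C8) (x : V3) : C8 :=
  (fun j => lapC (fun y => (Z y).1 j) x, fun j => lapC (fun y => (Z y).2 j) x)

/-- Componentwise partial derivative of an 8-vector field. -/
def pd8 (i : Fin 3) (Z : V3 → C8) (x : V3) : C8 :=
  (fun j => pd i (fun y => (Z y).1 j) x, fun j => pd i (fun y => (Z y).2 j) x)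

/-- The Hessian `∇²f` applied to a complex vector: `(∇²f · v)_j = ∑_k ∂_j∂_k f v_k`. -/
def hessC (f : V3 → ℂ) (x : V3) (v : CV3) : CV3 :=
  fun i => ∑ j, pd i (fun y => pd j f y) x * v j

/-- The rescaled potential `W_{μ,γ} = κ I₈ + (1/2) P∓(Dβ, Dα)`. -/
def Wpot (kap al be : V3 → ℂ) (x : V3) (X : C8) : C8 :=
  kap x • X + (1/2 : ℂ) • Pmp (Dg be x) (Dg al x) X

/-- The transposed potential `W_{μ,γ}ᵗ = κ I₈ + (1/2) P∓(Dα, Dβ)` (i.e. `W_{γ,μ}`). -/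
def WpotT (kap al be : V3 → ℂ) (x : V3) (X : C8) : C8 :=
  kap x • X + (1/2 : ℂ) • Pmp (Dg al x) (Dg be x) X

/-- The augmented Maxwell potential
`V_{μ,γ} = ω diag(μ I₄, γ I₄) + (1/2)(P∓(Dβ,Dα) + P̃(Dβ,Dα))`. -/
def Vpot (om : ℝ) (mu ga al be : V3 → ℂ) (x : V3) (X : C8) : C8 :=
  diag8 ((om : ℂ) * mu x) ((om : ℂ) * ga x) X +
    (1/2 : ℂ) • (Pmp (Dg be x) (Dg al x) X + Ptilde (Dg be x) (Dg al x) X)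

/-- The matrix potential `Q̃_{μ,γ}` of Lemma 1.1 (first factorization). -/
def Qt (al be kap : V3 → ℂ) (x : V3) (X : C8) : C8 :=
  ((1/2 : ℂ) • mk4 (lapC al x * X.1 0)
      (fun i => 2 * hessC al x (vec4 X.1) i - lapC al x * vec4 X.1 i)
    - ((kap x ^ 2 + (1/4 : ℂ) * dotC (Dg al x) (Dg al x)) • X.1
        + mk4 (2 * dotC (Dg kap x) (vec4 X.2)) (fun i => 2 * X.2 0 * Dg kap x i)),
   (1/2 : ℂ) • mk4 (lapC be x * X.2 0)
      (fun i => 2 * hessC be x (vec4 X.2) i - lapC be x * vec4 X.2 i)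
    - ((kap x ^ 2 + (1/4 : ℂ) * dotC (Dg be x) (Dg be x)) • X.2
        + mk4 (2 * dotC (Dg kap x) (vec4 X.1)) (fun i => 2 * X.1 0 * Dg kap x i)))

/-- The matrix potential `Q̃'_{μ,γ}` of Lemma 1.1 (second factorization). -/
def Qt' (al be kap : V3 → ℂ) (x : V3) (X : C8) : C8 :=
  (-((1/2 : ℂ) • mk4 (lapC be x * X.1 0)
      (fun i => 2 * hessC be x (vec4 X.1) i - lapC be x * vec4 X.1 i))
    - ((kap x ^ 2 + (1/4 : ℂ) * dotC (Dg be x) (Dg be x)) • X.1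
        + mk4 0 (fun i => 2 * crossC (Dg kap x) (vec4 X.2) i)),
   -((1/2 : ℂ) • mk4 (lapC al x * X.2 0)
      (fun i => 2 * hessC al x (vec4 X.2) i - lapC al x * vec4 X.2 i))
    - ((kap x ^ 2 + (1/4 : ℂ) * dotC (Dg al x) (Dg al x)) • X.2
        + mk4 0 (fun i => -(2 * crossC (Dg kap x) (vec4 X.1) i))))

section pdRules

variable {i : Fin 3} {f g : V3 → ℂ} {x : V3}

lemma pd_add (hf : DifferentiableAt ℝ f x) (hg : DifferentiableAt ℝ g x) :
    pd i (fun y => f y + g y) x = pd i f x + pd i g x := by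
  simp [pd, fderiv_fun_add hf hg]

lemma pd_sub (hf : DifferentiableAt ℝ f x) (hg : DifferentiableAt ℝ g x) :
    pd i (fun y => f y - g y) x = pd i f x - pd i g x := by
  simp [pd, fderiv_fun_sub hf hg]

lemma pd_mul (hf : DifferentiableAt ℝ f x) (hg : DifferentiableAt ℝ g x) :
    pd i (fun y => f y * g y) x = f x * pd i g x + g x * pd i f x := by
  simp [pd, fderiv_fun_mul hf hg]

lemma pd_const_mul (c : ℂ) (hf : DifferentiableAt ℝ f x) :
    pd i (fun y => c * f y) x = c * pd i f x := by
  simp [pd, fderiv_const_mul hf]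

lemma differentiableAt_pd (hf : ContDiffAt ℝ 2 f x) (i : Fin 3) :
    DifferentiableAt ℝ (pd i f) x := by
  have h : DifferentiableAt ℝ (fderiv ℝ f) x :=
    (hf.fderiv_right (m := 1) (by norm_num)).differentiableAt (by norm_num)
  exact h.clm_apply (differentiableAt_const _)

/-- Symmetry of second partial derivatives of a `C²` function. -/
lemma pd_comm (hf : ContDiffAt ℝ 2 f x) (i j : Fin 3) :
    pd i (pd j f) x = pd j (pd i f) x := by
  have h : DifferentiableAt ℝ (fderiv ℝ f) x :=
    (hf.fderiv_right (m := 1) (by norm_num)).differentiableAt (by norm_num)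
  have key (a b : V3) :
      fderiv ℝ (fun y => fderiv ℝ f y b) x a = fderiv ℝ (fderiv ℝ f) x a b := by
    rw [fderiv_clm_apply h (differentiableAt_const _)]
    simp
  have hs : IsSymmSndFDerivAt ℝ f x := hf.isSymmSndFDerivAt (by simp)
  exact ((key _ _).trans (hs _ _)).trans (key _ _).symm

end pdRules

/-- The gradient identity `∇κ = κ (∇α + ∇β) / 2`. It comes from differentiating
`κ² = ω² exp (α + β)`, so that it holds for every choice of branches of the logarithms and of the
square root. -/
lemma pd_kap {U : Set V3} (hU : IsOpen U) {om : ℝ} (hom : 0 < om) {mu ga al be kap : V3 → ℂ}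
    (heal : ∀ x ∈ U, Complex.exp (al x) = ga x)
    (hebe : ∀ x ∈ U, Complex.exp (be x) = mu x)
    (hekap : ∀ x ∈ U, kap x ^ 2 = (om : ℂ) ^ 2 * ga x * mu x)
    {x : V3} (hx : x ∈ U) (hal : DifferentiableAt ℝ al x) (hbe : DifferentiableAt ℝ be x)
    (hkap : DifferentiableAt ℝ kap x) (i : Fin 3) :
    pd i kap x = kap x * (pd i al x + pd i be x) / 2 := by
  have heq : (fun y => kap y * kap y) =ᶠ[𝓝 x]
      fun y => (om : ℂ) ^ 2 * Complex.exp (al y + be y) := by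
    filter_upwards [hU.mem_nhds hx] with y hy
    rw [← sq, hekap y hy, Complex.exp_add, heal y hy, hebe y hy, mul_assoc]
  have hom' : (om : ℂ) ≠ 0 := by exact_mod_cast hom.ne'
  have h0 : kap x ≠ 0 := by
    intro h
    have := heq.self_of_nhds
    simp [h, hom', Complex.exp_ne_zero] at this
  have hexp : pd i (fun y => (om : ℂ) ^ 2 * Complex.exp (al y + be y)) x
      = (om : ℂ) ^ 2 * (Complex.exp (al x + be x) * (pd i al x + pd i be x)) := by
    rw [pd_const_mul _ ((hal.fun_add hbe).cexp)]
    simp [pd, ((hal.fun_add hbe).hasFDerivAt.cexp).fderiv, fderiv_fun_add hal hbe, mul_add]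
  have hd : pd i (fun y => kap y * kap y) x
      = pd i (fun y => (om : ℂ) ^ 2 * Complex.exp (al y + be y)) x := by
    simp only [pd, heq.fderiv_eq]
  rw [hexp, pd_mul hkap hkap] at hd
  have hval : kap x * kap x = (om : ℂ) ^ 2 * Complex.exp (al x + be x) := heq.self_of_nhds
  apply mul_left_cancel₀ h0
  linear_combination hd / 2 - (pd i al x + pd i be x) / 2 * hval

section components

variable (f : ℂ) (v : CV3) (u : C4)

lemma mk4_zero : mk4 f v 0 = f := rfl
lemma mk4_one : mk4 f v 1 = v 0 := rfl
lemma mk4_two : mk4 f v 2 = v 1 := rfl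
lemma mk4_three : mk4 f v 3 = v 2 := rfl
lemma vec4_zero : vec4 u 0 = u 1 := rfl
lemma vec4_one : vec4 u 1 = u 2 := rfl
lemma vec4_two : vec4 u 2 = u 3 := rfl

end components

set_option maxHeartbeats 4000000 in
/-- Both factorizations at a point `x`, for coefficients and components `p`, `q` of the two blocks
of the field that are `C²` at `x`. The exponential relations between `κ`, `α`, `β` enter only
through the gradient identity `hk`. -/
lemma factorization_jet (p q : Fin 4 → V3 → ℂ) (al be kap : V3 → ℂ) (x : V3)
    (hp : ∀ j, ContDiffAt ℝ 2 (p j) x) (hq : ∀ j, ContDiffAt ℝ 2 (q j) x)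
    (hal : ContDiffAt ℝ 2 al x) (hbe : ContDiffAt ℝ 2 be x) (hkap : ContDiffAt ℝ 2 kap x)
    (hk : ∀ i, pd i kap x = kap x * (pd i al x + pd i be x) / 2) (Z : V3 → C8)
    (hZ : Z = fun y => (fun j => p j y, fun j => q j y)) :
      (PtildeD (fun y => PtildeD Z y - WpotT kap al be y (Z y)) x
          + Wpot kap al be x (PtildeD Z x - WpotT kap al be x (Z x))
        = -(lap8 Z x) + Qt al be kap x (Z x)) ∧
      (PtildeD (fun y => PtildeD Z y + Wpot kap al be y (Z y)) x
          - WpotT kap al be x (PtildeD Z x + Wpot kap al be x (Z x))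
        = -(lap8 Z x) + Qt' al be kap x (Z x)) := by
  subst hZ
  have two : (2 : WithTop ℕ∞) ≠ 0 := by norm_num
  have dp (j) : DifferentiableAt ℝ (p j) x := (hp j).differentiableAt two
  have dq (j) : DifferentiableAt ℝ (q j) x := (hq j).differentiableAt two
  have da : DifferentiableAt ℝ al x := hal.differentiableAt two
  have db : DifferentiableAt ℝ be x := hbe.differentiableAt two
  have dk : DifferentiableAt ℝ kap x := hkap.differentiableAt two
  have ddp (i j) : DifferentiableAt ℝ (pd i (p j)) x := differentiableAt_pd (hp j) i
  have ddq (i j) : DifferentiableAt ℝ (pd i (q j)) x := differentiableAt_pd (hq j) i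
  have dda (i) : DifferentiableAt ℝ (pd i al) x := differentiableAt_pd hal i
  have ddb (i) : DifferentiableAt ℝ (pd i be) x := differentiableAt_pd hbe i
  have cp (j) := pd_comm (hp j)
  have cq (j) := pd_comm (hq j)
  have ca := pd_comm hal
  have cb := pd_comm hbe
  constructor <;> refine Prod.ext (funext fun j => ?_) (funext fun j => ?_) <;> fin_cases j <;>
  · simp only [Fin.zero_eta, Fin.mk_one, Fin.reduceFinMk, PtildeD, PminusD, PplusD, Wpot, WpotT, Pmp,
      Pplus, Pminus, lap8, lapC, Qt, Qt', Ddiv, Dcurl, curl3, Dg, dotC, crossC, hessC,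
      Fin.sum_univ_three, mk4_zero, mk4_one, mk4_two, mk4_three, vec4_zero, vec4_one, vec4_two,
      Prod.fst_add, Prod.snd_add, Prod.fst_sub, Prod.snd_sub, Prod.fst_neg, Prod.snd_neg,
      Prod.smul_fst, Prod.smul_snd, Pi.add_apply, Pi.sub_apply, Pi.neg_apply, Pi.smul_apply,
      smul_eq_mul, Matrix.cons_val]
    -- `simp` leaves `fun y => p j y`, while the rules below are about `p j`.
    eta_reduce
    -- Expand every derivative by the Leibniz rule, put mixed second derivatives into one order and
    -- eliminate `∇κ`; what is left is polynomial in the jets, modulo `I ^ 2 = -1`.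
    simp (disch := fun_prop) only [pd_sub, pd_add, pd_const_mul, pd_mul, hk,
      cp _ 1 0, cp _ 2 0, cp _ 2 1, cq _ 1 0, cq _ 2 0, cq _ 2 1, ca 1 0, ca 2 0, ca 2 1,
      cb 1 0, cb 2 0, cb 2 1]
    ring_nf
    simp only [Complex.I_sq]
    ring

/-- Lemma 1.1: the factorizations
`(P̃(D) + W_{μ,γ})(P̃(D) - W_{μ,γ}ᵗ) = -Δ I₈ + Q̃_{μ,γ}` and
`(P̃(D) - W_{μ,γ}ᵗ)(P̃(D) + W_{μ,γ}) = -Δ I₈ + Q̃'_{μ,γ}`,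
as identities of differential operators applied to arbitrary `C²` 8-vector fields. -/
theorem schroedinger_factorization
    (U : Set V3) (hU : IsOpen U) (om : ℝ) (hom : 0 < om)
    (mu ga al be kap : V3 → ℂ)
    (hmu : ContDiffOn ℝ 2 mu (closure U)) (hga : ContDiffOn ℝ 2 ga (closure U))
    (hmu0 : ∀ x ∈ closure U, mu x ≠ 0) (hga0 : ∀ x ∈ closure U, ga x ≠ 0)
    -- `α = log γ`, `β = log μ`, `κ = ω (γ μ)^{1/2}` (chosen branches)
    (hal : ContDiffOn ℝ 2 al (closure U)) (hbe : ContDiffOn ℝ 2 be (closure U))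
    (hkap : ContDiffOn ℝ 2 kap (closure U))
    (heal : ∀ x ∈ closure U, Complex.exp (al x) = ga x)
    (hebe : ∀ x ∈ closure U, Complex.exp (be x) = mu x)
    (hekap : ∀ x ∈ closure U, kap x ^ 2 = (om : ℂ) ^ 2 * ga x * mu x)
    (Z : V3 → C8)
    (hZ1 : ContDiffOn ℝ 2 (fun y => (Z y).1) U) (hZ2 : ContDiffOn ℝ 2 (fun y => (Z y).2) U) :
    ∀ x ∈ U,
      (PtildeD (fun y => PtildeD Z y - WpotT kap al be y (Z y)) x
          + Wpot kap al be x (PtildeD Z x - WpotT kap al be x (Z x))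
        = -(lap8 Z x) + Qt al be kap x (Z x)) ∧
      (PtildeD (fun y => PtildeD Z y + Wpot kap al be y (Z y)) x
          - WpotT kap al be x (PtildeD Z x + Wpot kap al be x (Z x))
        = -(lap8 Z x) + Qt' al be kap x (Z x)) := by
  intro x hx
  have hmem : closure U ∈ 𝓝 x := mem_of_superset (hU.mem_nhds hx) subset_closure
  have hal' := hal.contDiffAt hmem
  have hbe' := hbe.contDiffAt hmem
  have hkap' := hkap.contDiffAt hmem
  have two : (2 : WithTop ℕ∞) ≠ 0 := by norm_num
  exact factorization_jet (fun j y => (Z y).1 j) (fun j y => (Z y).2 j) al be kap x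
    (contDiffAt_pi.1 (hZ1.contDiffAt (hU.mem_nhds hx)))
    (contDiffAt_pi.1 (hZ2.contDiffAt (hU.mem_nhds hx))) hal' hbe' hkap'
    (pd_kap hU hom (fun y hy => heal y (subset_closure hy)) (fun y hy => hebe y (subset_closure hy))
      (fun y hy => hekap y (subset_closure hy)) hx (hal'.differentiableAt two)
      (hbe'.differentiableAt two) (hkap'.differentiableAt two)) Z rfl

end
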